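/- Let a_0,…,a_n be integers, and let N(x) = a_0 + a_1 x + ⋯ + a_n x^n. Let s be a complex number with Re(s) > n and s ≠ j for every integer 0 ≤ j ≤ n. Then as real p tends to 1 from above, (p−1)^{N(1)} · exp( Σ_{m=1}^{∞} p^{−ms} N(p^m)/m ) tends to Π_{j=0}^{n} (s − j)^{−a_j}, where p^{−ms} denotes the complex power of the positive real p and the powers (s−j)^{−a_j} are integer powers. -/

import Mathlib

/-!
Put `w_j = p^(j - s)`, so `‖w_j‖ = p^(j - Re s) < 1` for `p > 1` and `j ≤ n`. The `m`-th summand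
is `∑ j, a_j w_j^m / m`, hence by the Taylor series of the logarithm the exponential equals
`∏ j, (1 - w_j)^(-a_j)`. Distributing `(p - 1)^(∑ a_j)` over the factors gives
`∏ j, ((1 - w_j) / (p - 1))^(-a_j)`, and each base is minus the difference quotient of
`x ↦ x^(j - s)` at `1`, which tends to `s - j ≠ 0`.
-/

open Complex Filter Topology Finset

/-- The normalized factor `(1 - p^(-r)) / (p - 1)` tends to `r`, by differentiating a power
at `1`. -/
lemma tendsto_one_sub_cpow_div (r : ℂ) (hr : r ≠ 0) :
    Tendsto (fun p : ℝ => (1 - (p : ℂ) ^ (-r)) / ((p : ℂ) - 1)) (𝓝[>] (1 : ℝ)) (𝓝 r) := by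
  have hd := (hasDerivAt_ofReal_cpow_const (x := 1) one_ne_zero (neg_ne_zero.mpr hr)).tendsto_slope
  have hd' := (hd.mono_left (nhdsWithin_mono (1 : ℝ)
    (fun x (hx : x ∈ Set.Ioi (1 : ℝ)) => ne_of_gt hx))).neg
  simp only [ofReal_one, one_cpow, mul_one, neg_neg] at hd'
  refine hd'.congr fun p => ?_
  simp only [slope_def_module, ofReal_one, one_cpow, real_smul, ofReal_inv, ofReal_sub]
  rw [div_eq_inv_mul, ← mul_neg, neg_sub]

lemma exp_tsum_eq_prod (n : ℕ) (a : ℕ → ℤ) (s : ℂ) (hre : (n : ℝ) < s.re)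
    (p : ℝ) (hp : 1 < p) :
    Complex.exp (∑' m : ℕ,
            (p : ℂ) ^ (-((m : ℂ) + 1) * s) *
              (∑ j ∈ Finset.range (n + 1), (a j : ℂ) * ((p : ℂ) ^ (m + 1)) ^ j) /
                ((m : ℂ) + 1)) =
      ∏ j ∈ Finset.range (n + 1), (1 - (p : ℂ) ^ (-(s - j))) ^ (-(a j)) := by
  have hp0 : (0 : ℝ) < p := by linarith
  have hpc : (p : ℂ) ≠ 0 := by exact_mod_cast hp0.ne'
  have hw : ∀ j ∈ Finset.range (n + 1), ‖(p : ℂ) ^ (-(s - j))‖ < 1 := by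
    intro j hj
    rw [norm_cpow_eq_rpow_re_of_pos hp0]
    apply Real.rpow_lt_one_of_one_lt_of_neg hp
    have : (j : ℝ) ≤ n := by exact_mod_cast Nat.lt_succ_iff.mp (Finset.mem_range.mp hj)
    simp only [neg_re, sub_re, natCast_re]
    linarith
  have hsum : HasSum (fun m : ℕ =>
            (p : ℂ) ^ (-((m : ℂ) + 1) * s) *
              (∑ j ∈ Finset.range (n + 1), (a j : ℂ) * ((p : ℂ) ^ (m + 1)) ^ j) /
                ((m : ℂ) + 1))
      (∑ j ∈ Finset.range (n + 1), (a j : ℂ) * -Complex.log (1 - (p : ℂ) ^ (-(s - j)))) := by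
    have h := hasSum_sum (s := Finset.range (n + 1)) fun j hj =>
      (hasSum_taylorSeries_neg_log' (hw j hj)).mul_left (a j : ℂ)
    refine (congrArg (fun f : ℕ → ℂ => HasSum f _) (funext fun m => ?_)).mpr h
    rw [Finset.mul_sum, Finset.sum_div]
    refine Finset.sum_congr rfl fun j _ => ?_
    have e : ((p : ℂ) ^ (-(s - j))) ^ (m + 1) =
        (p : ℂ) ^ (-((m : ℂ) + 1) * s) * ((p : ℂ) ^ (m + 1)) ^ j := by
      rw [← cpow_nat_mul, ← pow_mul, ← cpow_natCast, ← cpow_add _ _ hpc]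
      congr 1
      push_cast
      ring
    rw [e]
    ring
  rw [hsum.tsum_eq, Complex.exp_sum]
  refine Finset.prod_congr rfl fun j hj => ?_
  have hne : 1 - (p : ℂ) ^ (-(s - j)) ≠ 0 := by
    intro h0
    have := hw j hj
    rw [← sub_eq_zero.mp h0, norm_one] at this
    exact lt_irrefl _ this
  rw [mul_neg, ← neg_mul, ← Int.cast_neg, Complex.exp_int_mul, Complex.exp_log hne]

/-- Soulé's 𝔽₁-zeta function as a limit: for the counting polynomial
`N(x) = a_0 + a_1 x + ⋯ + a_n x^n` and `s` with `Re s > n`, `s ≠ j` for `0 ≤ j ≤ n`,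
the renormalized local zeta value `(p-1)^{N(1)} exp(Σ_{m≥1} p^{-ms} N(p^m)/m)` tends to
`Π_{j=0}^n (s-j)^{-a_j}` as real `p → 1⁺`. -/
theorem tendsto_soule_zeta_polynomial (n : ℕ) (a : ℕ → ℤ) (s : ℂ)
    (hre : (n : ℝ) < s.re) (hs : ∀ j : ℕ, j ≤ n → s ≠ (j : ℂ)) :
    Tendsto (fun p : ℝ =>
        ((p : ℂ) - 1) ^ (∑ j ∈ Finset.range (n + 1), a j) *
          Complex.exp (∑' m : ℕ,
            (p : ℂ) ^ (-((m : ℂ) + 1) * s) *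
              (∑ j ∈ Finset.range (n + 1), (a j : ℂ) * ((p : ℂ) ^ (m + 1)) ^ j) /
                ((m : ℂ) + 1)))
      (𝓝[>] (1 : ℝ))
      (𝓝 (∏ j ∈ Finset.range (n + 1), (s - (j : ℂ)) ^ (-(a j)))) := by
  have hlim : Tendsto (fun p : ℝ => ∏ j ∈ Finset.range (n + 1),
      ((1 - (p : ℂ) ^ (-(s - j))) / ((p : ℂ) - 1)) ^ (-(a j))) (𝓝[>] (1 : ℝ))
      (𝓝 (∏ j ∈ Finset.range (n + 1), (s - (j : ℂ)) ^ (-(a j)))) := by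
    refine tendsto_finsetProd _ fun j hj => ?_
    have hne : s - (j : ℂ) ≠ 0 :=
      sub_ne_zero.mpr (hs j (Nat.lt_succ_iff.mp (Finset.mem_range.mp hj)))
    exact (tendsto_one_sub_cpow_div _ hne).zpow₀ _ (Or.inl hne)
  refine hlim.congr' ?_
  filter_upwards [self_mem_nhdsWithin] with p hp
  have hp1 : (p : ℂ) - 1 ≠ 0 := by
    rw [sub_ne_zero]
    exact_mod_cast (ne_of_gt hp : p ≠ 1)
  have hpow : ((p : ℂ) - 1) ^ (∑ j ∈ Finset.range (n + 1), a j) =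
      ∏ j ∈ Finset.range (n + 1), ((p : ℂ) - 1) ^ (a j) := by
    induction Finset.range (n + 1) using Finset.induction_on with
    | empty => simp
    | insert i t hi ih => rw [Finset.sum_insert hi, Finset.prod_insert hi, zpow_add₀ hp1, ih]
  rw [exp_tsum_eq_prod n a s hre p hp, hpow, ← Finset.prod_mul_distrib]
  refine Finset.prod_congr rfl fun j _ => ?_
  rw [div_zpow, zpow_neg ((p : ℂ) - 1), div_inv_eq_mul, mul_comm]
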